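/- Fix T > 0, matrices A ∈ ℝ^{n×n}, B ∈ ℝ^{n×p}, E_ℓ ∈ ℝ^{n×m_ℓ} (ℓ = 1,…,m), x₀ ∈ ℝⁿ, u₀ ∈ ℝᵖ, continuous demands v_ℓ : ℝ → ℝ^{m_ℓ} vanishing on (−∞,0], continuous hold functions ξ_{i,k} : ℝ → ℝᵖ, a constraint matrix C ∈ ℝ^{q×n} with rows C_z and right-hand side d ∈ ℝ^q, continuously differentiable sensitivities h_ℓ : ℝ → ℝ, and ϑ > 0. With x(t; τ, α) = x̄₀(t) + Σ_{k,i} α_{i,k} x̄ᵘ_{i,k}(t) + Σ_ℓ x̄ᵛ_ℓ(t−τ_ℓ), the soft-constraint cost J'(τ, α) = Σ_ℓ h_ℓ(τ_ℓ) + Σ_z ∫₀ᵀ exp(ϑ(C_z x(t; τ, α) − d_z)) dt is continuously differentiable in (τ, α), and its partial derivative with respect to τ_ℓ equals h_ℓ'(τ_ℓ) − Σ_z ∫₀ᵀ ϑ·exp(ϑ(C_z x(t; τ, α) − d_z))·C_z(A x̄ᵛ_ℓ(t−τ_ℓ) + E_ℓ v_ℓ(t−τ_ℓ)) dt. -/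

import Mathlib

open Matrix MeasureTheory Set

/-- `x̄₀(t) = exp(At)·x₀ + ∫₀ᵗ exp(A(t−β))·B·u₀ dβ`. -/
noncomputable def xbar0 {n p : ℕ} (A : Matrix (Fin n) (Fin n) ℝ)
    (B : Matrix (Fin n) (Fin p) ℝ) (x₀ : Fin n → ℝ) (u₀ : Fin p → ℝ) (t : ℝ) : Fin n → ℝ :=
  (NormedSpace.exp (t • A)).mulVec x₀ +
    ∫ β in (0:ℝ)..t, (NormedSpace.exp ((t - β) • A)).mulVec (B.mulVec u₀)

/-- `x̄ᵘ(t) = ∫₀ᵗ exp(A(t−β))·B·ξ(β) dβ`. -/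
noncomputable def xbaru {n p : ℕ} (A : Matrix (Fin n) (Fin n) ℝ)
    (B : Matrix (Fin n) (Fin p) ℝ) (ξ : ℝ → Fin p → ℝ) (t : ℝ) : Fin n → ℝ :=
  ∫ β in (0:ℝ)..t, (NormedSpace.exp ((t - β) • A)).mulVec (B.mulVec (ξ β))

/-- `x̄ᵛ(s) = ∫₀ˢ exp(A(s−β))·E·v(β) dβ`, extended by `0` for `s < 0`. -/
noncomputable def xbarv {n m : ℕ} (A : Matrix (Fin n) (Fin n) ℝ)
    (E : Matrix (Fin n) (Fin m) ℝ) (v : ℝ → Fin m → ℝ) (s : ℝ) : Fin n → ℝ :=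
  if 0 ≤ s then
    ∫ β in (0:ℝ)..s, (NormedSpace.exp ((s - β) • A)).mulVec (E.mulVec (v β))
  else 0

/-- The parametrized state
`x(t; τ, α) = x̄₀(t) + Σ_{i,k} α_{i,k} x̄ᵘ_{i,k}(t) + Σ_ℓ x̄ᵛ_ℓ(t−τ_ℓ)`. -/
noncomputable def xstate {n p m K : ℕ} (A : Matrix (Fin n) (Fin n) ℝ)
    (B : Matrix (Fin n) (Fin p) ℝ) (x₀ : Fin n → ℝ) (u₀ : Fin p → ℝ)
    (md : Fin m → ℕ) (E : ∀ ℓ, Matrix (Fin n) (Fin (md ℓ)) ℝ)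
    (v : ∀ ℓ, ℝ → Fin (md ℓ) → ℝ) (ξ : Fin p → Fin K → ℝ → Fin p → ℝ)
    (τ : Fin m → ℝ) (α : Fin p → Fin K → ℝ) (t : ℝ) : Fin n → ℝ :=
  xbar0 A B x₀ u₀ t + (∑ i, ∑ k, α i k • xbaru A B (ξ i k) t) +
    ∑ ℓ, xbarv A (E ℓ) (v ℓ) (t - τ ℓ)

/-- The soft-constraint cost
`J'(τ,α) = Σ_ℓ h_ℓ(τ_ℓ) + Σ_z ∫₀ᵀ exp(ϑ(C_z x(t;τ,α) − d_z)) dt`. -/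
noncomputable def Jsoft {n p m K q : ℕ} (T : ℝ) (A : Matrix (Fin n) (Fin n) ℝ)
    (B : Matrix (Fin n) (Fin p) ℝ) (x₀ : Fin n → ℝ) (u₀ : Fin p → ℝ)
    (md : Fin m → ℕ) (E : ∀ ℓ, Matrix (Fin n) (Fin (md ℓ)) ℝ)
    (v : ∀ ℓ, ℝ → Fin (md ℓ) → ℝ) (ξ : Fin p → Fin K → ℝ → Fin p → ℝ)
    (C : Matrix (Fin q) (Fin n) ℝ) (d : Fin q → ℝ) (h : Fin m → ℝ → ℝ) (ϑ : ℝ)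
    (τ : Fin m → ℝ) (α : Fin p → Fin K → ℝ) : ℝ :=
  (∑ ℓ, h ℓ (τ ℓ)) + ∑ z, ∫ t in (0:ℝ)..T,
    Real.exp (ϑ * ((C z ⬝ᵥ xstate A B x₀ u₀ md E v ξ τ α t) - d z))

/-!
Each of `x̄₀`, `x̄ᵘ`, `x̄ᵛ` solves a linear equation `x' = A x + g` with continuous forcing `g`; for
`x̄ᵛ` the extension by `0` causes no kink because the demand vanishes on `(-∞, 0]`. Hence the state
`x(t; τ, α)` is `C¹` jointly in `(τ, α, t)`, so is the penalty integrand, and the Leibniz rule for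
integrals over a compact interval gives both the regularity of `J'` and its partial derivatives.
-/

open Function
open scoped Topology

theorem exists_eventually_forall_norm_le_of_continuous_uncurry {X Y E : Type*}
    [TopologicalSpace X] [TopologicalSpace Y] [SeminormedAddCommGroup E] {f : X → Y → E}
    (hf : Continuous (uncurry f)) {K : Set Y} (hK : IsCompact K) (x₀ : X) :
    ∃ M : ℝ, ∀ᶠ x in 𝓝 x₀, ∀ y ∈ K, ‖f x y‖ ≤ M := by
  obtain ⟨M, hM⟩ := hK.exists_bound_of_continuousOn (hf.uncurry_left x₀).continuousOn
  refine ⟨M + 1, hK.eventually_forall_of_forall_eventually fun y hy => ?_⟩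
  have hlt : ‖uncurry f (x₀, y)‖ < M + 1 := (hM y hy).trans_lt (lt_add_one M)
  exact (hf.norm.continuousAt.eventually_lt_const hlt).mono fun _ => le_of_lt

section ParametricIntegral

variable {E : Type*} [NormedAddCommGroup E] [NormedSpace ℝ E]
  {μ : Measure ℝ} [IsLocallyFiniteMeasure μ]

theorem hasFDerivAt_intervalIntegral_of_continuous {𝕜 H : Type*} [RCLike 𝕜] [NormedSpace 𝕜 E]
    [NormedAddCommGroup H] [NormedSpace 𝕜 H] {F : H → ℝ → E} {F' : H → ℝ → H →L[𝕜] E}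
    (hF : ∀ y, Continuous (F y)) (hF' : Continuous (uncurry F'))
    (hFF' : ∀ y t, HasFDerivAt (F · t) (F' y t) y) (a b : ℝ) (y : H) :
    HasFDerivAt (fun y => ∫ t in a..b, F y t ∂μ) (∫ t in a..b, F' y t ∂μ) y := by
  obtain ⟨M, hM⟩ := exists_eventually_forall_norm_le_of_continuous_uncurry hF'
    (isCompact_uIcc (a := a) (b := b)) y
  exact intervalIntegral.hasFDerivAt_integral_of_dominated_of_fderiv_le (bound := fun _ => M) hM
    (.of_forall fun y => (hF y).aestronglyMeasurable)
    ((hF y).intervalIntegrable a b)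
    (hF'.uncurry_left y).aestronglyMeasurable
    (.of_forall fun t ht y hy => hy t (uIoc_subset_uIcc ht))
    intervalIntegrable_const
    (.of_forall fun t _ y _ => hFF' y t)

variable {H : Type*} [NormedAddCommGroup H] [NormedSpace ℝ H]

theorem hasFDerivAt_fderiv_uncurry_comp_inl {F : H → ℝ → E}
    (hF : Differentiable ℝ (uncurry F)) (y : H) (t : ℝ) :
    HasFDerivAt (F · t) (fderiv ℝ (uncurry F) (y, t) ∘L .inl ℝ H ℝ) y :=
  HasFDerivAt.comp (f := fun y => (y, t)) y (hF (y, t)).hasFDerivAt (hasFDerivAt_prodMk_left y t)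

theorem continuous_fderiv_uncurry_comp_inl {F : H → ℝ → E} (hF : ContDiff ℝ 1 (uncurry F)) :
    Continuous (uncurry fun y t => fderiv ℝ (uncurry F) (y, t) ∘L .inl ℝ H ℝ) :=
  (hF.continuous_fderiv one_ne_zero).clm_comp continuous_const

theorem hasFDerivAt_intervalIntegral_of_contDiff {F : H → ℝ → E}
    (hF : ContDiff ℝ 1 (uncurry F)) (a b : ℝ) (y : H) :
    HasFDerivAt (fun y => ∫ t in a..b, F y t ∂μ)
      (∫ t in a..b, fderiv ℝ (uncurry F) (y, t) ∘L .inl ℝ H ℝ ∂μ) y :=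
  hasFDerivAt_intervalIntegral_of_continuous (fun y => hF.continuous.uncurry_left y)
    (continuous_fderiv_uncurry_comp_inl hF)
    (hasFDerivAt_fderiv_uncurry_comp_inl (hF.differentiable one_ne_zero)) a b y

theorem contDiff_one_intervalIntegral [NullSingletonClass μ] {F : H → ℝ → E}
    (hF : ContDiff ℝ 1 (uncurry F)) (a b : ℝ) :
    ContDiff ℝ 1 fun y => ∫ t in a..b, F y t ∂μ :=
  contDiff_one_iff_hasFDerivAt.2 ⟨_,
    intervalIntegral.continuous_parametric_intervalIntegral_of_continuous'
      (continuous_fderiv_uncurry_comp_inl hF) a b,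
    hasFDerivAt_intervalIntegral_of_contDiff hF a b⟩

theorem hasDerivAt_intervalIntegral_of_contDiff {F : ℝ → ℝ → E}
    (hF : ContDiff ℝ 1 (uncurry F)) {s : ℝ} {F' : ℝ → E}
    (hF' : ∀ t, HasDerivAt (F · t) (F' t) s) (a b : ℝ) :
    HasDerivAt (fun s => ∫ t in a..b, F s t ∂μ) (∫ t in a..b, F' t ∂μ) s := by
  refine (hasFDerivAt_intervalIntegral_of_contDiff hF a b s).hasDerivAt.congr_deriv ?_
  have hcont := (continuous_fderiv_uncurry_comp_inl hF).uncurry_left s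
  rw [ContinuousLinearMap.intervalIntegral_apply (hcont.intervalIntegrable a b)]
  refine intervalIntegral.integral_congr fun t _ => ?_
  exact (hasFDerivAt_fderiv_uncurry_comp_inl (hF.differentiable one_ne_zero) s t).hasDerivAt.unique
    (hF' t)

end ParametricIntegral

theorem hasDerivAt_sum_update {𝕜 ι E : Type*} [NontriviallyNormedField 𝕜] [Fintype ι]
    [DecidableEq ι] [NormedAddCommGroup E] [NormedSpace 𝕜 E] {f : ι → 𝕜 → E} {x : ι → 𝕜} {i : ι}
    {f' : E} (hf : HasDerivAt (f i) f' (x i)) :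
    HasDerivAt (fun s => ∑ j, f j (update x i s j)) f' (x i) := by
  have hterm (j : ι) :
      HasDerivAt (fun s => f j (update x i s j)) ((Pi.single i f' : ι → E) j) (x i) := by
    rcases eq_or_ne j i with rfl | hji
    · simpa using hf
    · simpa [hji] using hasDerivAt_const (x i) (f j (x j))
  simpa using HasDerivAt.fun_sum (u := Finset.univ) fun j _ => hterm j

theorem hasDerivAt_matrix_mulVec {𝕜 ι κ : Type*} [NontriviallyNormedField 𝕜] [Fintype κ]
    {M : 𝕜 → Matrix ι κ 𝕜} {M' : Matrix ι κ 𝕜} {f : 𝕜 → κ → 𝕜} {f' : κ → 𝕜} {t : 𝕜}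
    (hM : ∀ i j, HasDerivAt (M · i j) (M' i j) t) (hf : HasDerivAt f f' t) :
    HasDerivAt (fun s => M s *ᵥ f s) (M' *ᵥ f t + M t *ᵥ f') t := by
  refine hasDerivAt_pi.2 fun i => ?_
  simpa [mulVec, dotProduct, Finset.sum_add_distrib] using
    HasDerivAt.fun_sum (u := Finset.univ) fun j _ => (hM i j).mul (hasDerivAt_pi.1 hf j)

section LinearODE

variable {ι : Type*} [Fintype ι]

theorem contDiff_one_of_hasDerivAt_mulVec_add {A : Matrix ι ι ℝ} {x g : ℝ → ι → ℝ}
    (hx : ∀ t, HasDerivAt x (A *ᵥ x t + g t) t) (hg : Continuous g) : ContDiff ℝ 1 x := by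
  have hx_diff : Differentiable ℝ x := fun t => (hx t).differentiableAt
  refine contDiff_one_iff_deriv.2 ⟨hx_diff, ?_⟩
  rw [funext fun t => (hx t).deriv]
  exact (continuous_const.matrix_mulVec hx_diff.continuous).add hg

variable [DecidableEq ι] (A : Matrix ι ι ℝ)

theorem hasDerivAt_exp_smul_apply (i j : ι) (t : ℝ) :
    HasDerivAt (fun s : ℝ => NormedSpace.exp (s • A) i j) ((A * NormedSpace.exp (t • A)) i j) t :=
  open scoped Matrix.Norms.Operator in
  (entryLinearMap ℝ ℝ i j).toContinuousLinearMap.hasFDerivAt.comp_hasDerivAt t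
    (hasDerivAt_exp_smul_const' A t)

theorem continuous_exp_smul : Continuous fun t : ℝ => NormedSpace.exp (t • A) :=
  continuous_matrix fun i j => continuous_iff_continuousAt.2 fun t =>
    (hasDerivAt_exp_smul_apply A i j t).continuousAt

theorem exp_add_smul (s t : ℝ) :
    NormedSpace.exp ((s + t) • A) = NormedSpace.exp (s • A) * NormedSpace.exp (t • A) := by
  rw [add_smul, exp_add_of_commute _ _ (((Commute.refl A).smul_left s).smul_right t)]

/-- The zero-state response at time `t` of `x' = A x + g`: the solution with `x 0 = 0`, given by
the variation-of-constants integral. Negative times are allowed, the integral being oriented. -/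
noncomputable def zeroStateResponse (g : ℝ → ι → ℝ) (t : ℝ) : ι → ℝ :=
  ∫ β in (0 : ℝ)..t, NormedSpace.exp ((t - β) • A) *ᵥ g β

variable {g : ℝ → ι → ℝ}

theorem continuous_exp_neg_smul_mulVec (hg : Continuous g) :
    Continuous fun β : ℝ => NormedSpace.exp (-β • A) *ᵥ g β :=
  ((continuous_exp_smul A).comp continuous_neg).matrix_mulVec hg

/-- Pulling `exp (t A)` out leaves an integrand independent of `t`, to which the fundamental
theorem of calculus applies. -/
theorem zeroStateResponse_eq_exp_mulVec_integral (hg : Continuous g) (t : ℝ) :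
    zeroStateResponse A g t =
      NormedSpace.exp (t • A) *ᵥ ∫ β in (0 : ℝ)..t, NormedSpace.exp (-β • A) *ᵥ g β := by
  have hpull := (NormedSpace.exp (t • A)).mulVecLin.toContinuousLinearMap.intervalIntegral_comp_comm
    ((continuous_exp_neg_smul_mulVec A hg).intervalIntegrable (μ := volume) 0 t)
  simpa [zeroStateResponse, sub_eq_add_neg, exp_add_smul] using hpull

theorem hasDerivAt_zeroStateResponse (hg : Continuous g) (t : ℝ) :
    HasDerivAt (zeroStateResponse A g) (A *ᵥ zeroStateResponse A g t + g t) t := by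
  have hint := (continuous_exp_neg_smul_mulVec A hg).integral_hasStrictDerivAt 0 t
  have hprod := hasDerivAt_matrix_mulVec (fun i j => hasDerivAt_exp_smul_apply A i j t)
    hint.hasDerivAt
  have hcancel : NormedSpace.exp (t • A) * NormedSpace.exp (-t • A) = 1 := by
    rw [← exp_add_smul, add_neg_cancel, zero_smul, NormedSpace.exp_zero]
  rw [funext (zeroStateResponse_eq_exp_mulVec_integral A hg)]
  exact hprod.congr_deriv (by simp only [mulVec_mulVec, hcancel, one_mulVec])

end LinearODE

section Penalty

variable {ι : Type*} [Fintype ι]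

/-- The exponential penalty, with sharpness `ϑ`, on violation of the scalar constraint
`c ⬝ᵥ x ≤ d` by the state `x`. -/
noncomputable def softPenalty (ϑ : ℝ) (c : ι → ℝ) (d : ℝ) (x : ι → ℝ) : ℝ :=
  Real.exp (ϑ * (c ⬝ᵥ x - d))

theorem contDiff_softPenalty (ϑ : ℝ) (c : ι → ℝ) (d : ℝ) {k : WithTop ℕ∞} :
    ContDiff ℝ k (softPenalty ϑ c d) := by
  unfold softPenalty dotProduct
  fun_prop

theorem hasDerivAt_softPenalty_comp (ϑ : ℝ) (c : ι → ℝ) (d : ℝ) {x : ℝ → ι → ℝ}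
    {x' : ι → ℝ} {s : ℝ} (hx : HasDerivAt x x' s) :
    HasDerivAt (fun s => softPenalty ϑ c d (x s))
      (ϑ * softPenalty ϑ c d (x s) * (c ⬝ᵥ x')) s := by
  have hdot : HasDerivAt (fun s => c ⬝ᵥ x s) (c ⬝ᵥ x') s :=
    HasDerivAt.fun_sum fun i _ => (hasDerivAt_pi.1 hx i).const_mul (c i)
  exact ((hdot.sub_const d).const_mul ϑ).exp.congr_deriv (by rw [softPenalty]; ring)

end Penalty

section State

variable {n p m : ℕ} (A : Matrix (Fin n) (Fin n) ℝ) (B : Matrix (Fin n) (Fin p) ℝ)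

theorem hasDerivAt_xbaru {ξ : ℝ → Fin p → ℝ} (hξ : Continuous ξ) (t : ℝ) :
    HasDerivAt (xbaru A B ξ) (A *ᵥ xbaru A B ξ t + B *ᵥ ξ t) t :=
  hasDerivAt_zeroStateResponse A (continuous_const.matrix_mulVec hξ) t

theorem hasDerivAt_xbar0 (x₀ : Fin n → ℝ) (u₀ : Fin p → ℝ) (t : ℝ) :
    HasDerivAt (xbar0 A B x₀ u₀) (A *ᵥ xbar0 A B x₀ u₀ t + B *ᵥ u₀) t := by
  have hfree := hasDerivAt_matrix_mulVec (fun i j => hasDerivAt_exp_smul_apply A i j t)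
    (hasDerivAt_const t x₀)
  have hforced := hasDerivAt_zeroStateResponse A (continuous_const (y := B *ᵥ u₀)) t
  refine (hfree.add hforced).congr_deriv ?_
  simp [xbar0, zeroStateResponse, mulVec_add, mulVec_mulVec, add_assoc]

theorem xbarv_eq_zeroStateResponse (E : Matrix (Fin n) (Fin m) ℝ) {v : ℝ → Fin m → ℝ}
    (hv₀ : ∀ s ≤ 0, v s = 0) : xbarv A E v = zeroStateResponse A fun β => E *ᵥ v β := by
  funext s
  rcases le_or_gt 0 s with hs | hs
  · exact if_pos hs
  · have hzero : zeroStateResponse A (fun β => E *ᵥ v β) s = ∫ _ in (0 : ℝ)..s, 0 := by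
      refine intervalIntegral.integral_congr fun β hβ => ?_
      simp [hv₀ β (uIcc_of_ge hs.le ▸ hβ).2]
    simp [xbarv, hs.not_ge, hzero]

theorem hasDerivAt_xbarv (E : Matrix (Fin n) (Fin m) ℝ) {v : ℝ → Fin m → ℝ} (hv : Continuous v)
    (hv₀ : ∀ s ≤ 0, v s = 0) (s : ℝ) :
    HasDerivAt (xbarv A E v) (A *ᵥ xbarv A E v s + E *ᵥ v s) s := by
  rw [xbarv_eq_zeroStateResponse A E hv₀]
  exact hasDerivAt_zeroStateResponse A (continuous_const.matrix_mulVec hv) s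

variable {K : ℕ} (x₀ : Fin n → ℝ) (u₀ : Fin p → ℝ) {md : Fin m → ℕ}
  (E : ∀ ℓ, Matrix (Fin n) (Fin (md ℓ)) ℝ) {v : ∀ ℓ, ℝ → Fin (md ℓ) → ℝ}

theorem contDiff_one_xstate (hv : ∀ ℓ, Continuous (v ℓ)) (hv₀ : ∀ ℓ, ∀ s ≤ 0, v ℓ s = 0)
    {ξ : Fin p → Fin K → ℝ → Fin p → ℝ} (hξ : ∀ i k, Continuous (ξ i k))
    {H : Type*} [NormedAddCommGroup H] [NormedSpace ℝ H] {τ : H → Fin m → ℝ}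
    {α : H → Fin p → Fin K → ℝ} {t : H → ℝ} (hτ : ContDiff ℝ 1 τ) (hα : ContDiff ℝ 1 α)
    (ht : ContDiff ℝ 1 t) :
    ContDiff ℝ 1 fun w => xstate A B x₀ u₀ md E v ξ (τ w) (α w) (t w) := by
  have h₀ : ContDiff ℝ 1 (xbar0 A B x₀ u₀) :=
    contDiff_one_of_hasDerivAt_mulVec_add (hasDerivAt_xbar0 A B x₀ u₀) continuous_const
  have hu (i k) : ContDiff ℝ 1 (xbaru A B (ξ i k)) :=
    contDiff_one_of_hasDerivAt_mulVec_add (hasDerivAt_xbaru A B (hξ i k))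
      (continuous_const.matrix_mulVec (hξ i k))
  have hd (ℓ) : ContDiff ℝ 1 (xbarv A (E ℓ) (v ℓ)) :=
    contDiff_one_of_hasDerivAt_mulVec_add (hasDerivAt_xbarv A (E ℓ) (hv ℓ) (hv₀ ℓ))
      (continuous_const.matrix_mulVec (hv ℓ))
  unfold xstate
  fun_prop

theorem hasDerivAt_xstate_update (ξ : Fin p → Fin K → ℝ → Fin p → ℝ) {ℓ : Fin m}
    (hv : Continuous (v ℓ)) (hv₀ : ∀ s ≤ 0, v ℓ s = 0) (τ : Fin m → ℝ) (α : Fin p → Fin K → ℝ)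
    (t : ℝ) :
    HasDerivAt (fun s => xstate A B x₀ u₀ md E v ξ (update τ ℓ s) α t)
      (-(A *ᵥ xbarv A (E ℓ) (v ℓ) (t - τ ℓ) + E ℓ *ᵥ v ℓ (t - τ ℓ))) (τ ℓ) :=
  (hasDerivAt_sum_update (f := fun ℓ s => xbarv A (E ℓ) (v ℓ) (t - s))
    ((hasDerivAt_xbarv A (E ℓ) hv hv₀ (t - τ ℓ)).comp_const_sub t (τ ℓ))).const_add _

theorem hasDerivAt_integral_softPenalty_xstate_update (hv : ∀ ℓ, Continuous (v ℓ))
    (hv₀ : ∀ ℓ, ∀ s ≤ 0, v ℓ s = 0) {ξ : Fin p → Fin K → ℝ → Fin p → ℝ}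
    (hξ : ∀ i k, Continuous (ξ i k)) (ϑ : ℝ) (c : Fin n → ℝ) (d a b : ℝ)
    (τ : Fin m → ℝ) (α : Fin p → Fin K → ℝ) (ℓ : Fin m) :
    HasDerivAt
      (fun s => ∫ t in a..b,
        softPenalty ϑ c d (xstate A B x₀ u₀ md E v ξ (update τ ℓ s) α t))
      (-∫ t in a..b, ϑ * softPenalty ϑ c d (xstate A B x₀ u₀ md E v ξ τ α t) *
        (c ⬝ᵥ (A *ᵥ xbarv A (E ℓ) (v ℓ) (t - τ ℓ) + E ℓ *ᵥ v ℓ (t - τ ℓ))))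
      (τ ℓ) := by
  have hpenalty : ContDiff ℝ 1 (uncurry fun s t : ℝ =>
      softPenalty ϑ c d (xstate A B x₀ u₀ md E v ξ (update τ ℓ s) α t)) :=
    (contDiff_softPenalty ϑ c d).comp (contDiff_one_xstate A B x₀ u₀ E hv hv₀ hξ
      ((contDiff_update 1 τ ℓ).comp contDiff_fst) contDiff_const contDiff_snd)
  have hpartial (t : ℝ) := hasDerivAt_softPenalty_comp ϑ c d
    (hasDerivAt_xstate_update A B x₀ u₀ E ξ (hv ℓ) (hv₀ ℓ) τ α t)
  refine (hasDerivAt_intervalIntegral_of_contDiff hpenalty hpartial a b).congr_deriv ?_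
  simp only [update_eq_self, dotProduct_neg, mul_neg, intervalIntegral.integral_neg]

end State

/-- Lemma 2 (τ-gradient): the soft-constraint cost `J'` is continuously
differentiable in `(τ, α)`, and
`∂J'/∂τ_ℓ = h_ℓ'(τ_ℓ) − Σ_z ∫₀ᵀ ϑ exp(ϑ(C_z x(t;τ,α) − d_z)) C_z(A x̄ᵛ_ℓ(t−τ_ℓ) + E_ℓ v_ℓ(t−τ_ℓ)) dt`. -/
theorem soft_cost_tau_gradient {n p m K q : ℕ} (T : ℝ) (hT : 0 < T)
    (A : Matrix (Fin n) (Fin n) ℝ) (B : Matrix (Fin n) (Fin p) ℝ)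
    (x₀ : Fin n → ℝ) (u₀ : Fin p → ℝ)
    (md : Fin m → ℕ) (E : ∀ ℓ, Matrix (Fin n) (Fin (md ℓ)) ℝ)
    (v : ∀ ℓ, ℝ → Fin (md ℓ) → ℝ) (hv : ∀ ℓ, Continuous (v ℓ))
    (hv0 : ∀ ℓ, ∀ s ≤ (0:ℝ), v ℓ s = 0)
    (ξ : Fin p → Fin K → ℝ → Fin p → ℝ) (hξ : ∀ i k, Continuous (ξ i k))
    (C : Matrix (Fin q) (Fin n) ℝ) (d : Fin q → ℝ)
    (h : Fin m → ℝ → ℝ) (hh : ∀ ℓ, ContDiff ℝ 1 (h ℓ))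
    (ϑ : ℝ) (hϑ : 0 < ϑ) :
    ContDiff ℝ 1
      (fun pr : (Fin m → ℝ) × (Fin p → Fin K → ℝ) =>
        Jsoft T A B x₀ u₀ md E v ξ C d h ϑ pr.1 pr.2) ∧
    ∀ (τ : Fin m → ℝ) (α : Fin p → Fin K → ℝ) (ℓ : Fin m),
      HasDerivAt
        (fun s : ℝ => Jsoft T A B x₀ u₀ md E v ξ C d h ϑ (Function.update τ ℓ s) α)
        (deriv (h ℓ) (τ ℓ) - ∑ z, ∫ t in (0:ℝ)..T,
          ϑ * Real.exp (ϑ * ((C z ⬝ᵥ xstate A B x₀ u₀ md E v ξ τ α t) - d z)) *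
            (C z ⬝ᵥ (A.mulVec (xbarv A (E ℓ) (v ℓ) (t - τ ℓ)) +
              (E ℓ).mulVec (v ℓ (t - τ ℓ)))))
        (τ ℓ) := by
  refine ⟨?_, fun τ α ℓ => ?_⟩
  · have hsensitivity : ContDiff ℝ 1 fun pr : (Fin m → ℝ) × (Fin p → Fin K → ℝ) =>
        ∑ ℓ, h ℓ (pr.1 ℓ) := by fun_prop
    refine hsensitivity.add (.sum fun z _ => contDiff_one_intervalIntegral ?_ 0 T)
    exact (contDiff_softPenalty ϑ (C z) (d z)).comp
      (contDiff_one_xstate A B x₀ u₀ E hv hv0 hξ (by fun_prop) (by fun_prop) contDiff_snd)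
  · have hsensitivity := hasDerivAt_sum_update (x := τ)
      ((hh ℓ).differentiable one_ne_zero (τ ℓ)).hasDerivAt
    have hpenalty (z : Fin q) := hasDerivAt_integral_softPenalty_xstate_update
      A B x₀ u₀ E hv hv0 hξ ϑ (C z) (d z) 0 T τ α ℓ
    refine (hsensitivity.add (.fun_sum fun z _ => hpenalty z)).congr_deriv ?_
    rw [Finset.sum_neg_distrib, ← sub_eq_add_neg]
    rfl
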